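/- (Factorization of the Tratnik polynomials.) Let j⁽⁰⁾,…,j⁽⁴⁾ be reals satisfying the inequalities of the context with N := j⁽¹⁾+j⁽²⁾−j⁽³⁾+j⁽⁴⁾+j⁽⁰⁾ a positive integer, and assume all Pochhammer symbols appearing in denominators below are nonzero. Then for all integers 0 ≤ x₁ ≤ x₂ ≤ N and k₁, k₂ ≥ 0 with k₁+k₂ ≤ N and k₁ ≤ x₂: r_{x₁}(k₁; −2j⁽²⁾−1, −2j⁽¹⁾−1, −x₂−1, x₂−2j⁽²⁾+2j⁽³⁾+1) · r_{N−x₂}(N−k₁−k₂; −2j⁽⁰⁾−1, −2j⁽⁴⁾−1, k₁−N−1, N−k₁−2j⁽⁰⁾−2j⁽¹⁾−1) = [ (k₁−N+2j⁽¹⁾+1)_{N−x₂} (−2j⁽⁴⁾)_{N−x₂} (k₁+2j⁽⁰⁾−N+1)_{k₂} (2k₁−2j⁽²⁾+2j⁽³⁾+2)_{k₂} ] / [ (N−k₁−2j⁽⁰⁾−2j⁽¹⁾−2j⁽⁴⁾−1)_{N−x₂} (−2j⁽⁰⁾)_{N−x₂} (k₁−N+2j⁽¹⁾+1)_{k₂}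 (−2j⁽⁴⁾)_{k₂} ] · r_{k₁}(x₁; −2j⁽²⁾−1, 2j⁽³⁾+1, −x₂−1, x₂−2j⁽¹⁾−2j⁽²⁾−1) · r_{k₂}(x₂−k₁; 2k₁−2j⁽²⁾+2j⁽³⁾+1, −2j⁽⁴⁾−1, k₁−N−1, k₁+N−2j⁽¹⁾−2j⁽²⁾+2j⁽³⁾+1). -/

import Mathlib

noncomputable section

open Finset Real

/-- Pochhammer symbol `(y)_k = y(y+1)⋯(y+k−1)` for real `y`. -/
def poch (y : ℝ) (k : ℕ) : ℝ := ∏ i ∈ Finset.range k, (y + i)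

/-- The terminating Racah function `r_n(m; α, β, −𝒩−1, δ)` on the grid `{0,…,𝒩}`:
`r_n(m) = ∑_{k=0}^{n} (−n)_k (n+α+β+1)_k (−m)_k (m−𝒩+δ)_k /
  ((α+1)_k (β+δ+1)_k (−𝒩)_k k!)`. -/
def racah (𝒩 : ℕ) (α β δ : ℝ) (n m : ℕ) : ℝ :=
  ∑ k ∈ Finset.range (n + 1),
    (poch (-(n : ℝ)) k * poch ((n : ℝ) + α + β + 1) k * poch (-(m : ℝ)) k *
        poch ((m : ℝ) - (𝒩 : ℝ) + δ) k) /
      (poch (α + 1) k * poch (β + δ + 1) k * poch (-(𝒩 : ℝ)) k * (Nat.factorial k : ℝ))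

/-!
The identity follows from two symmetries of the Racah functions. The first is duality: exchanging
the degree `n` with the variable `m` only permutes the parameters of the underlying `₄F₃`. The
second is the reflection `m ↦ 𝒩 - m`, which exchanges `α` with `β` and negates `δ` at the cost of
a quotient of Pochhammer symbols; it is Whipple's transformation of terminating balanced `₄F₃`
series. The first factors on the two sides are dual to each other, and the second factors are
related by reflection, duality and reflection again.

Whipple's transformation comes from expanding one quotient of Pochhammer symbols by
Pfaff–Saalschütz, interchanging the sums, and summing the inner one by Pfaff–Saalschütz again.
The denominators `E`, `F` are multiplied out in both formulas: the middle function of the chain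
above may terminate before its degree, and the corresponding symbols `(E)_n`, `(F)_n` may vanish.
-/

theorem poch_zero (y : ℝ) : poch y 0 = 1 :=
  prod_range_zero _

theorem poch_add (y : ℝ) (m n : ℕ) : poch y (m + n) = poch y m * poch (y + m) n := by
  simp only [poch, prod_range_add, Nat.cast_add, add_assoc]

theorem poch_succ (y : ℝ) (n : ℕ) : poch y (n + 1) = poch y n * (y + n) :=
  prod_range_succ _ _

theorem poch_succ' (y : ℝ) (n : ℕ) : poch y (n + 1) = y * poch (y + 1) n := by
  rw [add_comm, poch_add, Nat.cast_one]
  simp [poch]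

theorem poch_ne_zero_of_le {y : ℝ} {m n : ℕ} (h : m ≤ n) (hn : poch y n ≠ 0) : poch y m ≠ 0 := by
  obtain ⟨l, rfl⟩ := Nat.exists_eq_add_of_le h
  exact left_ne_zero_of_mul (poch_add y m l ▸ hn)

theorem poch_eq_poch_add_one_sub (y : ℝ) (n : ℕ) :
    poch y n = poch (y + 1) n - n * poch (y + 1) (n - 1) := by
  cases n with
  | zero => simp [poch_zero]
  | succ n => rw [poch_succ', poch_succ (y + 1), Nat.add_sub_cancel]; push_cast; ring

theorem poch_eq_ascPochhammer_eval (y : ℝ) (n : ℕ) : poch y n = (ascPochhammer ℝ n).eval y := by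
  induction n with
  | zero => simp [poch_zero]
  | succ n ih => rw [poch_succ, ascPochhammer_succ_eval, ih]

theorem poch_neg (y : ℝ) (n : ℕ) : poch (-y) n = (-1) ^ n * poch (y - n + 1) n := by
  simp only [poch_eq_ascPochhammer_eval, ascPochhammer_eval_neg_eq_descPochhammer,
    descPochhammer_eval_eq_ascPochhammer]

theorem poch_neg_natCast (n k : ℕ) :
    poch (-(n : ℝ)) k = (-1) ^ k * n.choose k * k.factorial := by
  rw [poch_eq_ascPochhammer_eval, ascPochhammer_eval_neg_eq_descPochhammer,
    descPochhammer_eval_eq_descFactorial, Nat.descFactorial_eq_factorial_mul_choose]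
  push_cast; ring

theorem poch_neg_natCast_eq_zero {n k : ℕ} (h : n < k) : poch (-(n : ℝ)) k = 0 := by
  simp [poch_neg_natCast, Nat.choose_eq_zero_of_lt h]

theorem poch_neg_natCast_ne_zero {n k : ℕ} (h : k ≤ n) : poch (-(n : ℝ)) k ≠ 0 := by
  have hchoose : n.choose k ≠ 0 := (Nat.choose_pos h).ne'
  simp [poch_neg_natCast, hchoose, Nat.factorial_ne_zero]

theorem sum_antidiagonal_assoc {M : Type*} [AddCommMonoid M] (f : ℕ → ℕ → ℕ → M) (n : ℕ) :
    ∑ p ∈ antidiagonal n, ∑ q ∈ antidiagonal p.1, f q.1 q.2 p.2 =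
      ∑ p ∈ antidiagonal n, ∑ q ∈ antidiagonal p.2, f p.1 q.1 q.2 := by
  simp only [sum_sigma']
  refine sum_nbij' (fun ⟨⟨_, l⟩, ⟨j, i⟩⟩ ↦ ⟨(j, i + l), (i, l)⟩)
    (fun ⟨⟨j, _⟩, ⟨i, l⟩⟩ ↦ ⟨(j + i, l), (j, i)⟩) ?_ ?_ ?_ ?_ ?_ <;>
    · rintro ⟨⟨a, b⟩, ⟨c, d⟩⟩ h
      simp only [mem_sigma, HasAntidiagonal.mem_antidiagonal] at h
      obtain ⟨rfl, rfl⟩ := h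
      simp [add_assoc]

theorem sum_antidiagonal_choose_mul_fst {R : Type*} [CommSemiring R] (f : ℕ → ℕ → R) (n : ℕ) :
    ∑ p ∈ antidiagonal n, (n.choose p.1 : R) * (p.1 * f p.1 p.2) =
      ∑ p ∈ antidiagonal n, (n.choose p.1 : R) * (p.2 * f (p.1 + 1) (p.2 - 1)) := by
  cases n with
  | zero => simp
  | succ n =>
    rw [Nat.sum_antidiagonal_succ, Nat.sum_antidiagonal_succ']
    simp only [Nat.cast_zero, zero_mul, mul_zero, zero_add, Nat.add_sub_cancel]
    refine sum_congr rfl fun p hp ↦ ?_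
    have hsub : n + 1 - p.1 = p.2 + 1 := by have := HasAntidiagonal.mem_antidiagonal.1 hp; lia
    have hchoose := congrArg (Nat.cast (R := R)) (Nat.choose_succ_right_eq (n + 1) p.1)
    rw [hsub, Nat.cast_mul, Nat.cast_mul] at hchoose
    rw [← mul_assoc, hchoose, mul_assoc]

/-- The summand, without its binomial coefficient, of the division-free Pfaff–Saalschütz sum. -/
def saalschutzTerm (D x y : ℝ) (j i : ℕ) : ℝ :=
  poch x j * poch y j * poch (D + j) i * poch (D - x - y) i

/-- The recursion behind the induction on the length of the Pfaff–Saalschütz sum: summed against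
binomial coefficients, the bracket on the right cancels by `sum_antidiagonal_choose_mul_fst`. -/
theorem saalschutzTerm_add_saalschutzTerm (D x y : ℝ) (j i : ℕ) :
    saalschutzTerm D x y j (i + 1) + saalschutzTerm D x y (j + 1) i =
      (D - x) * (D - y) * saalschutzTerm (D + 1) x y j i +
        (j * ((D + j) * saalschutzTerm (D + 1) x y j i) -
          i * ((D + (j + 1 : ℕ)) * saalschutzTerm (D + 1) x y (j + 1) (i - 1))) := by
  have hshift : D + 1 - x - y = D - x - y + 1 := by ring
  have hpoch : (i : ℝ) * poch (D + 1 + j) i =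
      i * ((D + 1 + j) * poch (D + 1 + (j + 1 : ℕ)) (i - 1)) := by
    cases i with
    | zero => simp
    | succ i => rw [poch_succ', Nat.add_sub_cancel]; push_cast; ring_nf
  have hcast : D + ((j + 1 : ℕ) : ℝ) = D + 1 + j := by push_cast; ring
  simp only [saalschutzTerm, hshift, hcast, poch_succ' (D + j), poch_succ' (D - x - y), poch_succ x,
    poch_succ y, add_right_comm D (j : ℝ) 1]
  rw [poch_eq_poch_add_one_sub (D - x - y) i]
  linear_combination -(poch x j * (x + j) * poch y j * (y + j) *
    poch (D - x - y + 1) (i - 1)) * hpoch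

theorem sum_choose_mul_saalschutzTerm (n : ℕ) (D x y : ℝ) :
    ∑ p ∈ antidiagonal n, (n.choose p.1 : ℝ) * saalschutzTerm D x y p.1 p.2 =
      poch (D - x) n * poch (D - y) n := by
  induction n generalizing D with
  | zero => simp [saalschutzTerm, poch_zero]
  | succ n ih =>
    have pascal : ∀ p ∈ antidiagonal n,
        (n.choose p.1 : ℝ) * saalschutzTerm D x y p.1 (p.2 + 1) +
            n.choose p.2 * saalschutzTerm D x y (p.1 + 1) p.2 =
          (D - x) * (D - y) * (n.choose p.1 * saalschutzTerm (D + 1) x y p.1 p.2) +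
            (n.choose p.1 * (p.1 * ((D + p.1) * saalschutzTerm (D + 1) x y p.1 p.2)) -
              n.choose p.1 * (p.2 * ((D + (p.1 + 1 : ℕ)) *
                saalschutzTerm (D + 1) x y (p.1 + 1) (p.2 - 1)))) := by
      intro p hp
      have hsymm : n.choose p.2 = n.choose p.1 := Nat.choose_symm_of_eq_add
        (by rw [← HasAntidiagonal.mem_antidiagonal.1 hp, add_comm])
      rw [hsymm, ← mul_add, saalschutzTerm_add_saalschutzTerm]
      ring
    rw [sum_antidiagonal_choose_succ_mul, ← sum_add_distrib, sum_congr rfl pascal,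
      sum_add_distrib, sum_sub_distrib,
      sum_antidiagonal_choose_mul_fst fun j i ↦ (D + j) * saalschutzTerm (D + 1) x y j i,
      sub_self, add_zero, ← mul_sum, ih (D + 1), poch_succ' (D - x), poch_succ' (D - y),
      sub_add_eq_add_sub, sub_add_eq_add_sub]
    ring

/-- Taking `c j = (D - B)_j (D - C)_j / (D)_j` gives Whipple's transformation, since by
Pfaff–Saalschütz the inner sum is then `(B)_k (C)_k / (D)_k`. -/
theorem sum_antidiagonal_saalschutz_convolution (n : ℕ) (A E s : ℝ) (c : ℕ → ℝ) :
    ∑ p ∈ antidiagonal n, (n.choose p.1 : ℝ) * poch A p.1 * poch (E + p.1) p.2 *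
        poch (E - A - s) p.2 *
          ∑ q ∈ antidiagonal p.1, (p.1.choose q.1 : ℝ) * poch s q.2 * c q.1 =
      ∑ p ∈ antidiagonal n, (n.choose p.1 : ℝ) * poch A p.1 * poch (E - A) p.2 *
        poch (E - s + p.1) p.2 * c p.1 := by
  have summand_assoc : ∀ p ∈ antidiagonal n, ∀ q ∈ antidiagonal p.1,
      (n.choose p.1 : ℝ) * poch A p.1 * poch (E + p.1) p.2 * poch (E - A - s) p.2 *
          ((p.1.choose q.1 : ℝ) * poch s q.2 * c q.1) =
        n.choose q.1 * poch A q.1 * c q.1 * ((n - q.1).choose q.2 *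
          saalschutzTerm (E + q.1) (A + q.1) s q.2 p.2) := by
    rintro ⟨k, l⟩ - ⟨j, i⟩ hji
    obtain rfl : j + i = k := HasAntidiagonal.mem_antidiagonal.1 hji
    have hchoose : (n.choose (j + i) : ℝ) * (j + i).choose j =
        n.choose j * (n - j).choose i := by
      have := Nat.choose_mul (n := n) (Nat.le_add_right j i)
      rw [Nat.add_sub_cancel_left] at this
      exact_mod_cast this
    simp only [saalschutzTerm, add_sub_add_right_eq_sub, poch_add, Nat.cast_add, ← add_assoc]
    linear_combination poch A j * poch (A + j) i * poch (E + j + i) l * poch (E - A - s) l *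
      poch s i * c j * hchoose
  simp only [mul_sum]
  rw [sum_congr rfl fun p hp ↦ sum_congr rfl (summand_assoc p hp),
    sum_antidiagonal_assoc (fun j i l ↦ (n.choose j : ℝ) * poch A j * c j * ((n - j).choose i *
      saalschutzTerm (E + j) (A + j) s i l))]
  refine sum_congr rfl fun ⟨j, m⟩ hjm ↦ ?_
  obtain rfl : j + m = n := HasAntidiagonal.mem_antidiagonal.1 hjm
  simp only [Nat.add_sub_cancel_left, ← mul_sum, sum_choose_mul_saalschutzTerm,
    add_sub_add_right_eq_sub]
  ring_nf

/-- The terminating series `₄F₃(-n, A, B, C; D, E, F; 1)` multiplied by `(E)_n (F)_n`, so that `D`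
is the only parameter left in a denominator. -/
def clearedFourFThree (n : ℕ) (A B C D E F : ℝ) : ℝ :=
  ∑ p ∈ antidiagonal n, (-1) ^ p.1 * (n.choose p.1 : ℝ) * poch A p.1 *
    (poch B p.1 * poch C p.1 / poch D p.1) * poch (E + p.1) p.2 * poch (F + p.1) p.2

theorem clearedFourFThree_eq_neg_one_pow_mul_sum (n : ℕ) (A B C D E F : ℝ) :
    clearedFourFThree n A B C D E F =
      (-1) ^ n * ∑ p ∈ antidiagonal n, (n.choose p.1 : ℝ) * poch A p.1 * poch (E + p.1) p.2 *
        poch (1 - n - F) p.2 * (poch B p.1 * poch C p.1 / poch D p.1) := by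
  rw [clearedFourFThree, mul_sum]
  refine sum_congr rfl fun ⟨k, l⟩ hkl ↦ ?_
  obtain rfl : k + l = n := HasAntidiagonal.mem_antidiagonal.1 hkl
  have hreflect : poch (1 - (k + l : ℕ) - F) l = (-1) ^ l * poch (F + k) l := by
    rw [show 1 - ((k + l : ℕ) : ℝ) - F = -(F + k + l - 1) by push_cast; ring, poch_neg]
    ring_nf
  have hsign : (-1 : ℝ) ^ (k + l) * (-1) ^ l = (-1) ^ k := by
    rw [pow_add, mul_assoc, ← mul_pow]; simp
  simp only [hreflect, ← hsign]
  ring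

theorem poch_mul_poch_div_eq_sum (k : ℕ) {B C D : ℝ} (hD : poch D k ≠ 0) :
    poch B k * poch C k / poch D k =
      ∑ p ∈ antidiagonal k, (k.choose p.1 : ℝ) * poch (B + C - D) p.2 *
        (poch (D - B) p.1 * poch (D - C) p.1 / poch D p.1) := by
  have saalschutz := sum_choose_mul_saalschutzTerm k D (D - B) (D - C)
  rw [sub_sub_cancel, sub_sub_cancel] at saalschutz
  rw [← saalschutz, sum_div]
  refine sum_congr rfl fun ⟨j, i⟩ hji ↦ ?_
  obtain rfl : j + i = k := HasAntidiagonal.mem_antidiagonal.1 hji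
  have hDj : poch D j ≠ 0 := poch_ne_zero_of_le (Nat.le_add_right j i) hD
  rw [poch_add] at hD ⊢
  have hDi : poch (D + j) i ≠ 0 := right_ne_zero_of_mul hD
  rw [saalschutzTerm, show D - (D - B) - (D - C) = B + C - D by ring]
  field_simp

theorem clearedFourFThree_swap (n : ℕ) (A B C D E F : ℝ) :
    clearedFourFThree n A B C D E F = clearedFourFThree n A B C D F E :=
  sum_congr rfl fun _ _ ↦ mul_right_comm _ _ _

theorem clearedFourFThree_whipple {n : ℕ} {A B C D E F : ℝ} (hD : poch D n ≠ 0)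
    (hbalanced : A + B + C + 1 - n = D + E + F) :
    clearedFourFThree n A B C D E F =
      clearedFourFThree n A (D - B) (D - C) D (A + 1 - n - E) (A + 1 - n - F) := by
  have hbailey := sum_antidiagonal_saalschutz_convolution n A E (B + C - D)
    fun j ↦ poch (D - B) j * poch (D - C) j / poch D j
  have hF : E - A - (B + C - D) = 1 - n - F := by linarith
  have hE' : E - (B + C - D) = A + 1 - n - F := by linarith
  have hF' : 1 - (n : ℝ) - (A + 1 - n - E) = E - A := by ring
  rw [clearedFourFThree_swap n A (D - B), clearedFourFThree_eq_neg_one_pow_mul_sum,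
    clearedFourFThree_eq_neg_one_pow_mul_sum, hF', ← hE', ← hF]
  congr 1
  convert hbailey using 1
  · refine sum_congr rfl fun p hp ↦ ?_
    rw [poch_mul_poch_div_eq_sum p.1
      (poch_ne_zero_of_le (HasAntidiagonal.antidiagonal.fst_le hp) hD)]
  · exact sum_congr rfl fun p _ ↦ by ring

theorem racah_eq_sum_range_min (𝒩 n m : ℕ) (α β δ : ℝ) :
    racah 𝒩 α β δ n m = ∑ k ∈ range (min n m + 1),
      (poch (-(n : ℝ)) k * poch (n + α + β + 1) k * poch (-(m : ℝ)) k * poch (m - 𝒩 + δ) k) /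
        (poch (α + 1) k * poch (β + δ + 1) k * poch (-(𝒩 : ℝ)) k * (Nat.factorial k : ℝ)) := by
  refine eventually_constant_sum (fun k hk ↦ ?_) (by lia)
  rcases min_lt_iff.1 (Nat.lt_of_succ_le hk) with h | h <;> simp [poch_neg_natCast_eq_zero h]

theorem racah_dual (𝒩 n m : ℕ) (α β δ : ℝ) :
    racah 𝒩 α β δ n m = racah 𝒩 α (δ - 𝒩 - 1 - α) (α + β + 1 + 𝒩) m n := by
  rw [racah_eq_sum_range_min, racah_eq_sum_range_min, min_comm]
  refine sum_congr rfl fun k _ ↦ ?_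
  ring_nf

section Racah

variable {𝒩 n m : ℕ} {α β δ : ℝ}

theorem poch_mul_poch_mul_racah (hα : poch (α + 1) (min n m) ≠ 0)
    (hβδ : poch (β + δ + 1) (min n m) ≠ 0) :
    poch (α + 1) n * poch (β + δ + 1) n * racah 𝒩 α β δ n m =
      clearedFourFThree n (n + α + β + 1) (-m) (m - 𝒩 + δ) (-𝒩) (α + 1) (β + δ + 1) := by
  rw [racah, clearedFourFThree, ← Nat.sum_antidiagonal_eq_sum_range_succ (fun k _ ↦
    (poch (-(n : ℝ)) k * poch (n + α + β + 1) k * poch (-(m : ℝ)) k * poch (m - 𝒩 + δ) k) /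
      (poch (α + 1) k * poch (β + δ + 1) k * poch (-(𝒩 : ℝ)) k * (Nat.factorial k : ℝ))), mul_sum]
  refine sum_congr rfl fun ⟨k, l⟩ hkl ↦ ?_
  obtain rfl : k + l = n := HasAntidiagonal.mem_antidiagonal.1 hkl
  rcases le_or_gt k m with hkm | hmk
  · have hk : k ≤ min (k + l) m := le_min (Nat.le_add_right k l) hkm
    have hαk := poch_ne_zero_of_le hk hα
    have hβδk := poch_ne_zero_of_le hk hβδ
    simp only [poch_add, poch_neg_natCast (k + l) k]
    field_simp
  · simp [poch_neg_natCast_eq_zero hmk]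

theorem racah_reflect (hn : n ≤ 𝒩) (hm : m ≤ 𝒩)
    (hα : poch (α + 1) (min n (𝒩 - m)) ≠ 0) (hβδ : poch (β + δ + 1) (min n (𝒩 - m)) ≠ 0)
    (hβ : poch (β + 1) (min n m) ≠ 0) (hαδ : poch (α - δ + 1) (min n m) ≠ 0) :
    poch (α + 1) n * poch (β + δ + 1) n * racah 𝒩 α β δ n (𝒩 - m) =
      poch (β + 1) n * poch (α - δ + 1) n * racah 𝒩 β α (-δ) n m := by
  rw [poch_mul_poch_mul_racah hα hβδ, sub_eq_add_neg α δ, poch_mul_poch_mul_racah hβ hαδ,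
    clearedFourFThree_whipple (poch_neg_natCast_ne_zero hn) (by ring), Nat.cast_sub hm]
  ring_nf

theorem racah_sub_eq_mul_racah_dual_sub (hn : n ≤ 𝒩) (hm : m ≤ 𝒩)
    (hα : poch (α + 1) n ≠ 0) (hβδ : poch (β + δ + 1) n ≠ 0)
    (hβ : poch (β + 1) m ≠ 0) (hαδ : poch (α - δ + 1) m ≠ 0)
    (hβδ' : poch (-β - δ - 𝒩) m ≠ 0) (hα' : poch (-α - 𝒩) m ≠ 0) :
    racah 𝒩 α β δ n (𝒩 - m) =
      (poch (α - δ + 1) n * poch (β + 1) n * poch (-α - 𝒩) m * poch (-β - δ - 𝒩) m) /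
        (poch (β + δ + 1) n * poch (α + 1) n * poch (α - δ + 1) m * poch (β + 1) m) *
        racah 𝒩 (-β - δ - 𝒩 - 1) β (-α - β - 𝒩 - 1) m (𝒩 - n) := by
  have hdual : racah 𝒩 β α (-δ) n m =
      racah 𝒩 β (-β - δ - 𝒩 - 1) (-(-α - β - 𝒩 - 1)) m n := by
    rw [racah_dual]; ring_nf
  have hreflect := racah_reflect hn hm (poch_ne_zero_of_le (min_le_left _ _) hα)
    (poch_ne_zero_of_le (min_le_left _ _) hβδ) (poch_ne_zero_of_le (min_le_right _ _) hβ)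
    (poch_ne_zero_of_le (min_le_right _ _) hαδ)
  have hreflect' := racah_reflect (α := -β - δ - 𝒩 - 1) (β := β) (δ := -α - β - 𝒩 - 1) hm hn
  rw [show -β - δ - 𝒩 - 1 + 1 = -β - δ - 𝒩 by ring,
    show β + (-α - β - 𝒩 - 1) + 1 = -α - 𝒩 by ring,
    show -β - δ - 𝒩 - 1 - (-α - β - 𝒩 - 1) + 1 = α - δ + 1 by ring] at hreflect'
  specialize hreflect' (poch_ne_zero_of_le (min_le_left _ _) hβδ')
    (poch_ne_zero_of_le (min_le_left _ _) hα') (poch_ne_zero_of_le (min_le_left _ _) hβ)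
    (poch_ne_zero_of_le (min_le_left _ _) hαδ)
  rw [hdual] at hreflect
  field_simp
  linear_combination poch (β + 1) m * poch (α - δ + 1) m * hreflect -
    poch (β + 1) n * poch (α - δ + 1) n * hreflect'

end Racah

theorem stmt18_general {j0 j1 j2 j3 j4 : ℝ} {N x1 x2 k1 k2 : ℕ}
    (hNdef : (N : ℝ) = j1 + j2 - j3 + j4 + j0)
    (hx2 : x2 ≤ N) (hk : k1 + k2 ≤ N)
    (hgrid : ∀ k ≤ max x1 k1, poch (-2 * j2) k ≠ 0 ∧
      poch ((x2 : ℝ) - 2 * j1 - 2 * j2 + 2 * j3 + 1) k ≠ 0 ∧ poch (-(x2 : ℝ)) k ≠ 0)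
    (hj0 : poch (-2 * j0) (N - x2) ≠ 0)
    (hj014 : poch ((N : ℝ) - k1 - 2 * j0 - 2 * j1 - 2 * j4 - 1) (N - x2) ≠ 0)
    (hj23 : poch (2 * (k1 : ℝ) - 2 * j2 + 2 * j3 + 2) k2 ≠ 0)
    (hj1234 : poch ((k1 : ℝ) + N - 2 * j1 - 2 * j2 + 2 * j3 - 2 * j4 + 1) k2 ≠ 0)
    (hj1 : poch ((k1 : ℝ) - N + 2 * j1 + 1) k2 ≠ 0) (hj4 : poch (-2 * j4) k2 ≠ 0) :
    racah x2 (-2 * j2 - 1) (-2 * j1 - 1) ((x2 : ℝ) - 2 * j2 + 2 * j3 + 1) x1 k1 *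
      racah (N - k1) (-2 * j0 - 1) (-2 * j4 - 1) ((N : ℝ) - k1 - 2 * j0 - 2 * j1 - 1)
        (N - x2) (N - k1 - k2)
    = (poch ((k1 : ℝ) - N + 2 * j1 + 1) (N - x2) * poch (-2 * j4) (N - x2) *
        poch ((k1 : ℝ) + 2 * j0 - N + 1) k2 * poch (2 * (k1 : ℝ) - 2 * j2 + 2 * j3 + 2) k2) /
      (poch ((N : ℝ) - k1 - 2 * j0 - 2 * j1 - 2 * j4 - 1) (N - x2) * poch (-2 * j0) (N - x2) *
        poch ((k1 : ℝ) - N + 2 * j1 + 1) k2 * poch (-2 * j4) k2) *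
      racah x2 (-2 * j2 - 1) (2 * j3 + 1) ((x2 : ℝ) - 2 * j1 - 2 * j2 - 1) k1 x1 *
      racah (N - k1) (2 * (k1 : ℝ) - 2 * j2 + 2 * j3 + 1) (-2 * j4 - 1)
        ((k1 : ℝ) + N - 2 * j1 - 2 * j2 + 2 * j3 + 1) k2 (x2 - k1) := by
  obtain rfl : j3 = j1 + j2 + j4 + j0 - N := by linarith
  have hk1 : k1 ≤ x2 := not_lt.1 fun h ↦
    (hgrid k1 (le_max_right _ _)).2.2 (poch_neg_natCast_eq_zero h)
  have hcast : ((N - k1 : ℕ) : ℝ) = N - k1 := Nat.cast_sub (hk1.trans hx2)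
  have hindex : N - k1 - (N - x2) = x2 - k1 := by lia
  have second_factor := racah_sub_eq_mul_racah_dual_sub (𝒩 := N - k1) (n := N - x2) (m := k2)
    (α := -2 * j0 - 1) (β := -2 * j4 - 1) (δ := N - k1 - 2 * j0 - 2 * j1 - 1) (by lia) (by lia)
    (by convert hj0 using 2; ring) (by convert hj014 using 2; ring)
    (by convert hj4 using 2; ring) (by convert hj1 using 2; ring)
    (by convert hj23 using 2; rw [hcast]; ring) (by convert hj1234 using 2; rw [hcast]; ring)
  rw [hcast, hindex] at second_factor
  rw [racah_dual x2 x1 k1, second_factor]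
  ring_nf

/-- Factorization of the bivariate Tratnik product of Racah polynomials into the Tratnik
form `R₂`: for `0 ≤ x₁ ≤ x₂ ≤ N` and `k₁, k₂ ≥ 0` with `k₁ + k₂ ≤ N`, `k₁ ≤ x₂`,
the product `r_{x₁}(k₁;…)·r_{N−x₂}(N−k₁−k₂;…)` equals an explicit quotient of
Pochhammer symbols times `r_{k₁}(x₁;…)·r_{k₂}(x₂−k₁;…)`. -/
theorem stmt18 (j0 j1 j2 j3 j4 : ℝ) (N : ℕ)
    (h12 : j1 ≥ j2) (h24 : j2 ≥ j4) (h04 : j0 ≥ j4)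
    (h0 : j0 ≥ 0) (h1 : j1 ≥ 0) (h2 : j2 ≥ 0) (h3 : j3 ≥ 0) (h4 : j4 ≥ 0)
    (hup : j1 + j2 + j0 + j4 ≥ j3) (hlow : j3 ≥ j1 + j2 + j0 - j4)
    (hN : 0 < N) (hNdef : (N : ℝ) = j1 + j2 - j3 + j4 + j0) :
    ∀ x1 x2 k1 k2 : ℕ, x1 ≤ x2 → x2 ≤ N → k1 + k2 ≤ N → k1 ≤ x2 →
    (∀ k : ℕ, k ≤ x1 →
      poch (-2*j2) k ≠ 0 ∧ poch ((x2 : ℝ) - 2*j1 - 2*j2 + 2*j3 + 1) k ≠ 0 ∧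
      poch (-(x2 : ℝ)) k ≠ 0) →
    (∀ k : ℕ, k ≤ N - x2 →
      poch (-2*j0) k ≠ 0 ∧ poch ((N : ℝ) - k1 - 2*j0 - 2*j1 - 2*j4 - 1) k ≠ 0 ∧
      poch ((k1 : ℝ) - N) k ≠ 0) →
    (∀ k : ℕ, k ≤ k1 →
      poch (-2*j2) k ≠ 0 ∧ poch ((x2 : ℝ) - 2*j1 - 2*j2 + 2*j3 + 1) k ≠ 0 ∧
      poch (-(x2 : ℝ)) k ≠ 0) →
    (∀ k : ℕ, k ≤ k2 →
      poch (2*(k1 : ℝ) - 2*j2 + 2*j3 + 2) k ≠ 0 ∧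
      poch ((k1 : ℝ) + N - 2*j1 - 2*j2 + 2*j3 - 2*j4 + 1) k ≠ 0 ∧
      poch ((k1 : ℝ) - N) k ≠ 0) →
    poch ((N : ℝ) - k1 - 2*j0 - 2*j1 - 2*j4 - 1) (N - x2) ≠ 0 →
    poch (-2*j0) (N - x2) ≠ 0 →
    poch ((k1 : ℝ) - N + 2*j1 + 1) k2 ≠ 0 →
    poch (-2*j4) k2 ≠ 0 →
    racah x2 (-2*j2 - 1) (-2*j1 - 1) ((x2 : ℝ) - 2*j2 + 2*j3 + 1) x1 k1 *
      racah (N - k1) (-2*j0 - 1) (-2*j4 - 1) ((N : ℝ) - k1 - 2*j0 - 2*j1 - 1)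
        (N - x2) (N - k1 - k2)
    = (poch ((k1 : ℝ) - N + 2*j1 + 1) (N - x2) * poch (-2*j4) (N - x2) *
        poch ((k1 : ℝ) + 2*j0 - N + 1) k2 * poch (2*(k1 : ℝ) - 2*j2 + 2*j3 + 2) k2) /
      (poch ((N : ℝ) - k1 - 2*j0 - 2*j1 - 2*j4 - 1) (N - x2) * poch (-2*j0) (N - x2) *
        poch ((k1 : ℝ) - N + 2*j1 + 1) k2 * poch (-2*j4) k2) *
      racah x2 (-2*j2 - 1) (2*j3 + 1) ((x2 : ℝ) - 2*j1 - 2*j2 - 1) k1 x1 *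
      racah (N - k1) (2*(k1 : ℝ) - 2*j2 + 2*j3 + 1) (-2*j4 - 1)
        ((k1 : ℝ) + N - 2*j1 - 2*j2 + 2*j3 + 1) k2 (x2 - k1) :=
  fun _ _ _ k2 _ hx2 hk _ hfirst _ hthird hfourth hj014 hj0 hj1 hj4 ↦
    stmt18_general hNdef hx2 hk (fun k h ↦ (le_max_iff.1 h).elim (hfirst k) (hthird k)) hj0 hj014
      (hfourth k2 le_rfl).1 (hfourth k2 le_rfl).2.1 hj1 hj4
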